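/- The matrices {G_{ij} : i, j ∈ [d]} are linearly independent, their span U is closed under matrix multiplication, and the ℂ-linear map U → M_{d+1}(ℂ) sending G_{ij} to the matrix unit E_{ij} (the (d+1)×(d+1) matrix with 1 in position (i,j) and 0 elsewhere) is an isomorphism of ℂ-algebras; in particular U ≅ M_{d+1}(ℂ) and dim U = (d+1)². -/

import Mathlib

open Finset Matrix

/-- Vertex set of the wreath product `K_{n 0} ≀ K_{n 1} ≀ ⋯ ≀ K_{n (d-1)}`
(paper indices `n_1, …, n_d` correspond to `n 0, …, n (d-1)`). -/
abbrev Vx (d : ℕ) (n : ℕ → ℕ) : Type := (i : Fin d) → Fin (n i)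

/-- `delta x y = 0` if `x = y`; otherwise `delta x y` is the largest (1-based)
index at which `x` and `y` differ. -/
def delta {d : ℕ} {n : ℕ → ℕ} (x y : Vx d n) : ℕ :=
  (Finset.univ.filter fun i => x i ≠ y i).sup fun i => (i : ℕ) + 1

/-- The `i`-th adjacency matrix of the wreath product: `(A i) x y = 1` iff `delta x y = i`. -/
noncomputable def A (d : ℕ) (n : ℕ → ℕ) (i : ℕ) : Matrix (Vx d n) (Vx d n) ℂ :=
  Matrix.of fun x y => if delta x y = i then 1 else 0

/-- The valencies: `k 0 = 1` and, for `1 ≤ i`, `k i = n_1 ⋯ n_{i-1} (n_i - 1)`,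
i.e. `k i = n 0 ⋯ n (i-2) * (n (i-1) - 1)`. -/
def k (n : ℕ → ℕ) (i : ℕ) : ℕ :=
  if i = 0 then 1 else (∏ j ∈ Finset.range (i - 1), n j) * (n (i - 1) - 1)

/-- The dual idempotent `E_i*` with respect to the base point `x₀`: the diagonal
0-1 matrix with `(E_i*)_{yy} = 1` iff `delta x₀ y = i`. -/
noncomputable def Es {d : ℕ} {n : ℕ → ℕ} (x₀ : Vx d n) (i : ℕ) :
    Matrix (Vx d n) (Vx d n) ℂ :=
  Matrix.of fun y z => if y = z ∧ delta x₀ y = i then 1 else 0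

/-- The all-ones matrix `J`. -/
noncomputable def Jm (d : ℕ) (n : ℕ → ℕ) : Matrix (Vx d n) (Vx d n) ℂ :=
  Matrix.of fun _ _ => 1

/-- The matrices `G i j`. -/
noncomputable def G {d : ℕ} {n : ℕ → ℕ} (x₀ : Vx d n) (i j : ℕ) :
    Matrix (Vx d n) (Vx d n) ℂ :=
  if i < j then ((k n j : ℂ))⁻¹ • (Es x₀ i * A d n j * Es x₀ j)
  else if j < i then ((k n j : ℂ))⁻¹ • (Es x₀ i * A d n i * Es x₀ j)
  else ((k n i : ℂ))⁻¹ • (Es x₀ i * Jm d n * Es x₀ i)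

/-- The span `U` of the matrices `G i j`, `i, j ∈ [d]`. -/
noncomputable def Uspan {d : ℕ} {n : ℕ → ℕ} (x₀ : Vx d n) :
    Submodule ℂ (Matrix (Vx d n) (Vx d n) ℂ) :=
  Submodule.span ℂ (Set.range fun p : Fin (d + 1) × Fin (d + 1) => G x₀ p.1 p.2)

/-- The Terwilliger algebra of the wreath product with respect to `x₀`. -/
noncomputable def Ter {d : ℕ} {n : ℕ → ℕ} (x₀ : Vx d n) :
    Subalgebra ℂ (Matrix (Vx d n) (Vx d n) ℂ) :=
  Algebra.adjoin ℂ
    ((Set.range fun i : Fin (d + 1) => A d n i) ∪ (Set.range fun i : Fin (d + 1) => Es x₀ i))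

/-- The matrices `F i h`, for `1 ≤ i ≤ d` and `0 ≤ h ≤ i - 1`. -/
noncomputable def F {d : ℕ} {n : ℕ → ℕ} (x₀ : Vx d n) (i h : ℕ) :
    Matrix (Vx d n) (Vx d n) ℂ :=
  if h < i - 1 then
    (∑ j ∈ Finset.range (h + 1), (k n j : ℂ))⁻¹ •
        (∑ j ∈ Finset.range (h + 1), Es x₀ i * A d n j * Es x₀ i)
      - (∑ j ∈ Finset.range (h + 2), (k n j : ℂ))⁻¹ •
          (∑ j ∈ Finset.range (h + 2), Es x₀ i * A d n j * Es x₀ i)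
  else
    (∑ j ∈ Finset.range i, (k n j : ℂ))⁻¹ •
        (∑ j ∈ Finset.range i, Es x₀ i * A d n j * Es x₀ i)
      - G x₀ i i

/-!
Let `P` be the 0-1 matrix whose columns are the indicators of the spheres around `x₀`, and let `Q`
be the matrix whose rows average over these spheres. Since `delta` is an ultrametric, two points on
spheres of different radii are at distance the larger of the two radii, so the adjacency matrices
occurring in `G i j` are constant on the relevant blocks and `G i j = P * single i j 1 * Q`. As
`Q * P = 1`, the map `M ↦ P * M * Q` is an injective homomorphism of non-unital algebras, and it
sends the matrix units to the `G i j`.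
-/

section CornerEmbedding

variable {m n R : Type*} [Fintype m] [Fintype n] [DecidableEq n] [CommSemiring R]

/-- The embedding `M ↦ P * M * Q` of a full matrix algebra as a corner of a larger one, determined
by a left inverse `Q` of `P`. It is only non-unital: it sends `1` to the idempotent `P * Q`. -/
def cornerEmbedding (P : Matrix m n R) (Q : Matrix n m R) (hQP : Q * P = 1) :
    Matrix n n R →ₙₐ[R] Matrix m m R where
  toFun M := P * M * Q
  map_smul' c M := by simp
  map_zero' := by simp
  map_add' M N := by rw [Matrix.mul_add, Matrix.add_mul]
  map_mul' M N := by
    calc P * (M * N) * Q = P * M * (1 : Matrix n n R) * N * Q := by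
          simp only [Matrix.mul_one, Matrix.mul_assoc]
      _ = P * M * Q * (P * N * Q) := by simp only [← hQP, Matrix.mul_assoc]

theorem cornerEmbedding_apply (P : Matrix m n R) (Q : Matrix n m R) (hQP : Q * P = 1)
    (M : Matrix n n R) : cornerEmbedding P Q hQP M = P * M * Q :=
  rfl

theorem cornerEmbedding_injective (P : Matrix m n R) (Q : Matrix n m R) (hQP : Q * P = 1) :
    Function.Injective (cornerEmbedding P Q hQP) := by
  refine Function.LeftInverse.injective (g := fun M => Q * M * P) fun M => ?_
  calc Q * (P * M * Q) * P = Q * P * M * (Q * P) := by simp only [Matrix.mul_assoc]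
    _ = M := by rw [hQP, Matrix.one_mul, Matrix.mul_one]

end CornerEmbedding

theorem mul_single_one_mul_apply {l m n o R : Type*} [Fintype m] [Fintype n] [DecidableEq m]
    [DecidableEq n] [Semiring R] (P : Matrix l m R) (Q : Matrix n o R) (i : m) (j : n)
    (x : l) (y : o) : (P * single i j (1 : R) * Q) x y = P x i * Q j y := by
  rw [single_eq_single_vecMulVec_single, mul_vecMulVec, vecMulVec_mul, vecMulVec_apply,
    mulVec_single_one, single_one_vecMul, Matrix.col_apply, Matrix.row_apply]

section MapSingle

variable {m n R V : Type*} [Finite m] [Finite n] [DecidableEq m] [DecidableEq n]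
  [Semiring R] [AddCommMonoid V] [Module R V]

theorem span_range_map_single (f : Matrix m n R →ₗ[R] V) :
    Submodule.span R (Set.range fun p : m × n => f (single p.1 p.2 1)) = LinearMap.range f := by
  cases nonempty_fintype m
  simp only [← stdBasis_eq_single]
  rw [Set.range_comp' f, Submodule.span_image, Module.Basis.span_eq, Submodule.map_top]

theorem linearIndependent_map_single (f : Matrix m n R →ₗ[R] V) (hf : Function.Injective f) :
    LinearIndependent R fun p : m × n => f (single p.1 p.2 1) := by
  cases nonempty_fintype m
  simp only [← stdBasis_eq_single]
  exact (stdBasis R m n).linearIndependent.map_injOn f hf.injOn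

end MapSingle

section Fibers

variable {X ι : Type*} [DecidableEq ι] (K : Type*)

/-- The 0-1 matrix whose columns are the indicator vectors of the fibers of `f`. -/
def fiberIndicator [Zero K] [One K] (f : X → ι) : Matrix X ι K :=
  Matrix.of fun x i => if f x = i then 1 else 0

/-- The matrix whose `i`-th row averages over the fiber of `f` above `i`. The row is zero if that
fiber is empty. -/
def fiberMean [Fintype X] [DivisionSemiring K] (f : X → ι) : Matrix ι X K :=
  Matrix.of fun i x => if f x = i then (#{y | f y = i} : K)⁻¹ else 0

theorem fiberMean_mul_fiberIndicator [Fintype X] [DivisionSemiring K] [CharZero K] {f : X → ι}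
    (hf : Function.Surjective f) : fiberMean K f * fiberIndicator K f = 1 := by
  ext i j
  simp only [Matrix.mul_apply, fiberMean, fiberIndicator, Matrix.of_apply, mul_ite, mul_one,
    mul_zero, Matrix.one_apply]
  by_cases hij : i = j
  · obtain ⟨x, hx⟩ := hf i
    have hcard : (#{y | f y = i} : K) ≠ 0 :=
      Nat.cast_ne_zero.mpr (card_ne_zero_of_mem (mem_filter.mpr ⟨mem_univ x, hx⟩))
    subst hij
    simp only [← ite_and, and_self, if_true]
    rw [← sum_filter, sum_const, nsmul_eq_mul, mul_inv_cancel₀ hcard]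
  · rw [if_neg hij]
    exact sum_eq_zero fun x _ => by grind

end Fibers

section Wreath

variable {d : ℕ} {n : ℕ → ℕ}

theorem delta_le_iff {x y : Vx d n} {m : ℕ} :
    delta x y ≤ m ↔ ∀ j : Fin d, m ≤ j → x j = y j := by
  simp only [delta, Finset.sup_le_iff, mem_filter, mem_univ, true_and, Nat.add_one_le_iff]
  exact forall_congr' fun j => by rw [← not_imp_not, not_lt, not_not]

theorem delta_le (x y : Vx d n) : delta x y ≤ d :=
  delta_le_iff.mpr fun j hj => absurd j.isLt hj.not_gt

theorem delta_comm (x y : Vx d n) : delta x y = delta y x := by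
  simp only [delta, ne_comm]

theorem delta_le_max (x y z : Vx d n) : delta x z ≤ max (delta x y) (delta y z) :=
  delta_le_iff.mpr fun j hj =>
    (delta_le_iff.mp le_rfl j ((le_max_left _ _).trans hj)).trans
      (delta_le_iff.mp le_rfl j ((le_max_right _ _).trans hj))

theorem delta_eq_of_delta_lt {x y z : Vx d n} (h : delta x y < delta x z) :
    delta y z = delta x z := by
  have hxz := delta_le_max x y z
  have hyz := delta_le_max y x z
  rw [delta_comm y x] at hyz
  grind

theorem card_filter_delta_le (x : Vx d n) {m : ℕ} (hm : m ≤ d) :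
    #{y | delta x y ≤ m} = ∏ j ∈ range m, n j := by
  have hball : ({y | delta x y ≤ m} : Finset (Vx d n)) =
      Fintype.piFinset fun j : Fin d => if (j : ℕ) < m then univ else {x j} := by
    ext y
    simp only [mem_filter, mem_univ, true_and, Fintype.mem_piFinset, delta_le_iff]
    refine forall_congr' fun j => ?_
    split_ifs with hj
    · simp [hj]
    · simp [not_lt.mp hj, eq_comm]
  calc #{y | delta x y ≤ m} = ∏ j : Fin d, if (j : ℕ) < m then n j else 1 := by
        rw [hball, Fintype.card_piFinset]
        exact prod_congr rfl fun j _ => by split_ifs <;> simp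
    _ = ∏ j ∈ range d with j < m, n j := by
        rw [Fin.prod_univ_eq_prod_range (fun j => if j < m then n j else 1), prod_filter]
    _ = ∏ j ∈ range m, n j := by
        congr 1
        grind

theorem card_filter_delta_eq (x : Vx d n) {m : ℕ} (hm : m ≤ d) : #{y | delta x y = m} = k n m := by
  cases m with
  | zero => simpa [k] using card_filter_delta_le x hm
  | succ m =>
    have hsphere : ({y | delta x y = m + 1} : Finset (Vx d n)) =
        ({y | delta x y ≤ m + 1} : Finset (Vx d n)) \ ({y | delta x y ≤ m} : Finset _) := by
      grind
    have hsubset : ({y | delta x y ≤ m} : Finset (Vx d n)) ⊆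
        ({y | delta x y ≤ m + 1} : Finset _) := by
      grind
    rw [hsphere, card_sdiff_of_subset hsubset, card_filter_delta_le x hm,
      card_filter_delta_le x (Nat.le_of_succ_le hm), prod_range_succ]
    simp [k, Nat.mul_sub]

theorem k_pos (hn : ∀ i < d, 2 ≤ n i) {m : ℕ} (hm : m ≤ d) : 0 < k n m := by
  cases m with
  | zero => simp [k]
  | succ m =>
    have hprod : 0 < ∏ j ∈ range m, n j :=
      prod_pos fun j hj => zero_lt_two.trans_le (hn j ((mem_range.mp hj).trans hm))
    have hlast : 0 < n m - 1 := Nat.sub_pos_of_lt (hn m hm)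
    exact Nat.mul_pos hprod hlast

theorem Es_eq_diagonal (x₀ : Vx d n) (i : ℕ) :
    Es x₀ i = Matrix.diagonal fun y => if delta x₀ y = i then 1 else 0 := by
  ext y z
  simp only [Es, Matrix.of_apply, Matrix.diagonal_apply, ite_and]

theorem Es_mul_mul_Es_apply (x₀ : Vx d n) (i j : ℕ) (M : Matrix (Vx d n) (Vx d n) ℂ)
    (y z : Vx d n) :
    (Es x₀ i * M * Es x₀ j) y z = if delta x₀ y = i ∧ delta x₀ z = j then M y z else 0 := by
  rw [Es_eq_diagonal, Es_eq_diagonal, Matrix.mul_diagonal, Matrix.diagonal_mul, ite_and]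
  split_ifs <;> simp

theorem G_apply (x₀ : Vx d n) (i j : ℕ) (y z : Vx d n) :
    G x₀ i j y z = if delta x₀ y = i ∧ delta x₀ z = j then (k n j : ℂ)⁻¹ else 0 := by
  rcases lt_trichotomy i j with hij | rfl | hji
  · have hblock (h : delta x₀ y = i ∧ delta x₀ z = j) : delta y z = j :=
      h.2 ▸ delta_eq_of_delta_lt (by rwa [h.1, h.2])
    simp +contextual [G, hij, Es_mul_mul_Es_apply, A, hblock]
  · simp [G, Es_mul_mul_Es_apply, Jm]
  · have hblock (h : delta x₀ y = i ∧ delta x₀ z = j) : delta y z = i := by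
      rw [delta_comm, ← h.1]
      exact delta_eq_of_delta_lt (by rwa [h.1, h.2])
    simp +contextual [G, hji, hji.not_gt, Es_mul_mul_Es_apply, A, hblock]

/-- The radius of the sphere around `x₀` containing `y`, as an element of the index set `[d]`. -/
def sphereIndex (x₀ y : Vx d n) : Fin (d + 1) :=
  ⟨delta x₀ y, Nat.lt_succ_of_le (delta_le x₀ y)⟩

theorem sphereIndex_eq_iff {x₀ y : Vx d n} {i : Fin (d + 1)} :
    sphereIndex x₀ y = i ↔ delta x₀ y = i :=
  Fin.ext_iff

theorem sphereIndex_surjective (hn : ∀ i < d, 2 ≤ n i) (x₀ : Vx d n) :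
    Function.Surjective (sphereIndex x₀) := by
  intro i
  have hpos : 0 < #{y | delta x₀ y = i} := by
    rw [card_filter_delta_eq x₀ i.is_le]
    exact k_pos hn i.is_le
  obtain ⟨y, hy⟩ := card_pos.mp hpos
  exact ⟨y, sphereIndex_eq_iff.mpr (mem_filter.mp hy).2⟩

theorem G_eq_fiberIndicator_mul_single_mul_fiberMean (x₀ : Vx d n) (i j : Fin (d + 1)) :
    G x₀ i j =
      fiberIndicator ℂ (sphereIndex x₀) * single i j (1 : ℂ) * fiberMean ℂ (sphereIndex x₀) := by
  ext y z
  rw [G_apply, mul_single_one_mul_apply]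
  simp only [fiberIndicator, fiberMean, Matrix.of_apply, sphereIndex_eq_iff,
    card_filter_delta_eq x₀ j.is_le, ite_and, ite_mul, one_mul, zero_mul]

/-- The embedding of `M_{d+1}(ℂ)` onto `U`, sending the matrix unit `E_{ij}` to `G i j`. -/
noncomputable def sphereEmbedding (hn : ∀ i < d, 2 ≤ n i) (x₀ : Vx d n) :
    Matrix (Fin (d + 1)) (Fin (d + 1)) ℂ →ₙₐ[ℂ] Matrix (Vx d n) (Vx d n) ℂ :=
  cornerEmbedding (fiberIndicator ℂ (sphereIndex x₀)) (fiberMean ℂ (sphereIndex x₀))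
    (fiberMean_mul_fiberIndicator ℂ (sphereIndex_surjective hn x₀))

theorem sphereEmbedding_injective (hn : ∀ i < d, 2 ≤ n i) (x₀ : Vx d n) :
    Function.Injective (sphereEmbedding hn x₀) :=
  cornerEmbedding_injective _ _ _

theorem sphereEmbedding_single (hn : ∀ i < d, 2 ≤ n i) (x₀ : Vx d n) (i j : Fin (d + 1)) :
    sphereEmbedding hn x₀ (single i j 1) = G x₀ i j := by
  rw [sphereEmbedding, cornerEmbedding_apply, G_eq_fiberIndicator_mul_single_mul_fiberMean]

theorem range_sphereEmbedding (hn : ∀ i < d, 2 ≤ n i) (x₀ : Vx d n) :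
    LinearMap.range (sphereEmbedding hn x₀ :
      Matrix (Fin (d + 1)) (Fin (d + 1)) ℂ →ₗ[ℂ] Matrix (Vx d n) (Vx d n) ℂ) = Uspan x₀ := by
  rw [← span_range_map_single, Uspan]
  simp only [← sphereEmbedding_single hn]
  rfl

theorem linearIndependent_G (hn : ∀ i < d, 2 ≤ n i) (x₀ : Vx d n) :
    LinearIndependent ℂ fun p : Fin (d + 1) × Fin (d + 1) => G x₀ (p.1 : ℕ) (p.2 : ℕ) := by
  simp only [← sphereEmbedding_single hn]
  exact linearIndependent_map_single
    (sphereEmbedding hn x₀ : Matrix (Fin (d + 1)) (Fin (d + 1)) ℂ →ₗ[ℂ] Matrix (Vx d n) (Vx d n) ℂ)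
    (sphereEmbedding_injective hn x₀)

theorem mul_mem_Uspan (hn : ∀ i < d, 2 ≤ n i) {x₀ : Vx d n} {u v : Matrix (Vx d n) (Vx d n) ℂ}
    (hu : u ∈ Uspan x₀) (hv : v ∈ Uspan x₀) : u * v ∈ Uspan x₀ := by
  rw [← range_sphereEmbedding hn] at hu hv ⊢
  obtain ⟨M, rfl⟩ := hu
  obtain ⟨N, rfl⟩ := hv
  exact ⟨M * N, map_mul (sphereEmbedding hn x₀) M N⟩

/-- The linear isomorphism of `M_{d+1}(ℂ)` with `U` obtained from `sphereEmbedding` by restricting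
the codomain. -/
noncomputable def matrixEquivUspan (hn : ∀ i < d, 2 ≤ n i) (x₀ : Vx d n) :
    Matrix (Fin (d + 1)) (Fin (d + 1)) ℂ ≃ₗ[ℂ] Uspan x₀ :=
  LinearEquiv.ofInjective (sphereEmbedding hn x₀ : _ →ₗ[ℂ] _) (sphereEmbedding_injective hn x₀) ≪≫ₗ
    LinearEquiv.ofEq _ _ (range_sphereEmbedding hn x₀)

theorem coe_matrixEquivUspan (hn : ∀ i < d, 2 ≤ n i) (x₀ : Vx d n)
    (M : Matrix (Fin (d + 1)) (Fin (d + 1)) ℂ) :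
    (matrixEquivUspan hn x₀ M : Matrix (Vx d n) (Vx d n) ℂ) = sphereEmbedding hn x₀ M :=
  rfl

theorem sphereEmbedding_matrixEquivUspan_symm (hn : ∀ i < d, 2 ≤ n i) {x₀ : Vx d n}
    (u : Uspan x₀) : sphereEmbedding hn x₀ ((matrixEquivUspan hn x₀).symm u) = u := by
  rw [← coe_matrixEquivUspan, LinearEquiv.apply_symm_apply]

end Wreath

/-- the `G i j` (`i, j ∈ [d]`) are linearly independent, their span `U` is
closed under matrix multiplication, and the linear map `U → M_{d+1}(ℂ)` sending `G i j`
to the matrix unit `E_{ij}` is an algebra isomorphism; in particular `U ≅ M_{d+1}(ℂ)`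
and `dim U = (d+1)²`. -/
theorem stmt4 (d : ℕ) (hd : 1 ≤ d) (n : ℕ → ℕ) (hn : ∀ i < d, 2 ≤ n i)
    (x₀ : Vx d n) :
    LinearIndependent ℂ (fun p : Fin (d + 1) × Fin (d + 1) => G x₀ (p.1 : ℕ) (p.2 : ℕ)) ∧
    (∀ u ∈ Uspan x₀, ∀ v ∈ Uspan x₀, u * v ∈ Uspan x₀) ∧
    ∃ e : Uspan x₀ ≃ₗ[ℂ] Matrix (Fin (d + 1)) (Fin (d + 1)) ℂ,
      (∀ (i j : Fin (d + 1)) (hmem : G x₀ (i : ℕ) (j : ℕ) ∈ Uspan x₀),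
        e ⟨G x₀ (i : ℕ) (j : ℕ), hmem⟩ = Matrix.single i j 1) ∧
      (∀ (u v : Uspan x₀)
          (hmem : (u : Matrix (Vx d n) (Vx d n) ℂ) * (v : Matrix (Vx d n) (Vx d n) ℂ) ∈ Uspan x₀),
        e ⟨(u : Matrix (Vx d n) (Vx d n) ℂ) * (v : Matrix (Vx d n) (Vx d n) ℂ), hmem⟩
          = e u * e v) ∧
    Module.finrank ℂ (Uspan x₀) = (d + 1) ^ 2 := by
  refine ⟨linearIndependent_G hn x₀, fun u hu v hv => mul_mem_Uspan hn hu hv,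
    (matrixEquivUspan hn x₀).symm, fun i j hmem => ?_, fun u v hmem => ?_, ?_⟩
  · apply sphereEmbedding_injective hn x₀
    rw [sphereEmbedding_matrixEquivUspan_symm, sphereEmbedding_single]
  · apply sphereEmbedding_injective hn x₀
    simp only [map_mul, sphereEmbedding_matrixEquivUspan_symm]
  · rw [← (matrixEquivUspan hn x₀).finrank_eq, Module.finrank_matrix]
    simp [sq]
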